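/- Let $d \geq 1$, let $0 \leq d_1 \leq d-1$, and let $A_2 \in \mathbb{Z}^{d\times d}$ be the identity matrix except one diagonal entry equal to $2$ with $d_1$ entries equal to $1$ earlier in that row (all other off-diagonal entries zero). Then the $\delta$-polynomial of the simplex $\mathcal{P}(A_2)$ is $1 + t^{k}$ where $k = 1 - \lfloor (1-d_1)/2 \rfloor$. -/

import Mathlib

open Set Pointwise

/-- The number of lattice points in the `n`-th dilation of `P ⊆ ℝ^N`. -/
noncomputable def ehr {N : ℕ} (P : Set (Fin N → ℝ)) (n : ℕ) : ℕ :=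
  Set.ncard {x : Fin N → ℤ | (fun i => (x i : ℝ)) ∈ (n : ℝ) • P}

/-- The `i`-th coefficient of `(1-λ)^(d+1) * (1 + ∑_{n ≥ 1} i(P,n) λ^n)`,
i.e. the `i`-th entry of the δ-vector of a `d`-dimensional integral polytope. -/
noncomputable def deltaVec {N : ℕ} (P : Set (Fin N → ℝ)) (d i : ℕ) : ℤ :=
  ∑ j ∈ Finset.range (i + 1),
    (-1 : ℤ) ^ (i - j) * (Nat.choose (d + 1) (i - j) : ℤ) * (ehr P j : ℤ)

/-- `P ⊆ ℝ^N` is an integral polytope of dimension `d`. -/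
def IsIntegralPolytope {N : ℕ} (P : Set (Fin N → ℝ)) (d : ℕ) : Prop :=
  ∃ V : Finset (Fin N → ℤ), V.Nonempty ∧
    P = convexHull ℝ ((fun v i => ((v i : ℝ))) '' (V : Set (Fin N → ℤ))) ∧
    Module.finrank ℝ (vectorSpan ℝ P) = d

theorem mem_smul_convexHull_insert_zero_range {ι E : Type*} [Fintype ι] [AddCommGroup E]
    [Module ℝ E] (v : ι → E) {r : ℝ} (hr : 0 ≤ r) (x : E) :
    x ∈ r • convexHull ℝ (insert (0 : E) (Set.range v)) ↔
      ∃ c : ι → ℝ, (∀ i, 0 ≤ c i) ∧ ∑ i, c i ≤ r ∧ ∑ i, c i • v i = x := by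
  classical
  constructor
  · rintro ⟨y, hy, rfl⟩
    have hsub : convexHull ℝ (insert (0 : E) (Set.range v)) ⊆
        {y | ∃ c : ι → ℝ, (∀ i, 0 ≤ c i) ∧ ∑ i, c i ≤ 1 ∧ ∑ i, c i • v i = y} := by
      refine convexHull_min ?_ ?_
      · rintro z (rfl | ⟨i, rfl⟩)
        · exact ⟨0, by simp, by simp, by simp⟩
        · refine ⟨Pi.single i 1, fun j => ?_, by simp, by simp [Pi.single_apply]⟩
          rw [Pi.single_apply]
          split_ifs <;> norm_num
      · rintro _ ⟨c, hc, hc1, rfl⟩ _ ⟨e, he, he1, rfl⟩ p q hp hq hpq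
        refine ⟨fun i => p * c i + q * e i, fun i => ?_, ?_, ?_⟩
        · have := hc i
          have := he i
          positivity
        · rw [Finset.sum_add_distrib, ← Finset.mul_sum, ← Finset.mul_sum]
          nlinarith
        · simp only [add_smul, mul_smul, Finset.sum_add_distrib, Finset.smul_sum]
    obtain ⟨c, hc, hc1, rfl⟩ := hsub hy
    refine ⟨fun i => r * c i, fun i => mul_nonneg hr (hc i), ?_, ?_⟩
    · rw [← Finset.mul_sum]
      nlinarith
    · simp only [mul_smul, Finset.smul_sum]
  · rintro ⟨c, hc, hcr, rfl⟩
    rcases hr.eq_or_lt with rfl | hr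
    · have h0 : ∀ i, c i = 0 := fun i =>
        le_antisymm ((Finset.single_le_sum (fun j _ => hc j) (Finset.mem_univ i)).trans hcr) (hc i)
      exact ⟨0, subset_convexHull ℝ _ (Set.mem_insert _ _), by simp [h0]⟩
    · refine ⟨∑ i, (c i / r) • v i, ?_, ?_⟩
      · refine mem_convexHull_of_exists_fintype (ι := Option ι)
          (fun o => o.elim (1 - ∑ i, c i / r) (fun i => c i / r)) (fun o => o.elim 0 v) ?_ ?_ ?_ ?_
        · rintro (_ | i)
          · simp only [Option.elim, ← Finset.sum_div, sub_nonneg]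
            exact (div_le_one hr).2 hcr
          · exact div_nonneg (hc i) hr.le
        · simp [Fintype.sum_option]
        · rintro (_ | i) <;> simp
        · simp [Fintype.sum_option]
      · simp only [Finset.smul_sum, smul_smul, mul_div_cancel₀ _ hr.ne']

theorem finite_setOf_sum_le (d m : ℕ) : {y : Fin d → ℕ | ∑ i, y i ≤ m}.Finite :=
  (Set.finite_Iic (fun _ : Fin d => m)).subset fun _ hy i =>
    (Finset.single_le_sum (fun _ _ => Nat.zero_le _) (Finset.mem_univ i)).trans hy

theorem ncard_setOf_sum_le (d m : ℕ) :
    {y : Fin d → ℕ | ∑ i, y i ≤ m}.ncard = (d + m).choose d := by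
  let e : {y : Fin d → ℕ | ∑ i, y i ≤ m} ≃ {P : Fin (d + 1) → ℕ // ∑ i, P i = m} :=
    { toFun := fun y => ⟨Fin.cons (m - ∑ i, y.1 i) y.1, by
        have : ∑ i, y.1 i ≤ m := y.2
        simp only [Fin.sum_univ_succ, Fin.cons_zero, Fin.cons_succ]
        omega⟩
      invFun := fun P => ⟨Fin.tail P.1, by
        have := P.2
        rw [Fin.sum_univ_succ] at this
        simp only [Set.mem_ofPred_eq, Fin.tail]
        omega⟩
      left_inv := fun y => by simp
      right_inv := fun P => by
        have := P.2
        rw [Fin.sum_univ_succ] at this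
        have h0 : m - ∑ i, Fin.tail P.1 i = P.1 0 := by
          simp only [Fin.tail]
          omega
        apply Subtype.ext
        simp only [h0, Fin.cons_self_tail] }
  rw [← Nat.card_coe_set_eq, Nat.card_congr (e.trans (Sym.equivNatSumOfFintype _ _).symm),
    Nat.card_eq_fintype_card, Sym.card_sym_eq_choose, Fintype.card_fin,
    show d + 1 + m - 1 = d + m by omega, Nat.choose_symm_add]

theorem ncard_setOf_sum_add_le (d s n : ℕ) :
    {y : Fin d → ℕ | ∑ i, y i + s ≤ n}.ncard =
      if s ≤ n then (d + (n - s)).choose d else 0 := by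
  split_ifs with h
  · rw [← ncard_setOf_sum_le]
    congr 1
    ext y
    simp only [Set.mem_ofPred_eq]
    omega
  · rw [Set.ncard_eq_zero ((finite_setOf_sum_le d n).subset fun y hy => by
      simp only [Set.mem_ofPred_eq] at hy ⊢
      omega)]
    ext y
    simp only [Set.mem_ofPred_eq, Set.mem_empty_iff_false, iff_false]
    omega

section Shear

variable {d : ℕ} (k : Fin d) (β : Fin d → ℤ)

/-- The simplex with vertices `0`, `e i` for `i ≠ k`, and `e k + β`. -/
def shearSimplex : Set (Fin d → ℝ) :=
  convexHull ℝ (insert (0 : Fin d → ℝ) (Set.range fun i j =>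
    (if i = j then (1 : ℝ) else 0) + if i = k then (β j : ℝ) else 0))

theorem mem_smul_shearSimplex_iff (hk : β k = 1) (n : ℕ) (x : Fin d → ℤ) :
    (fun i => (x i : ℝ)) ∈ (n : ℝ) • shearSimplex k β ↔
      (∀ i, 0 ≤ 2 * x i - β i * x k) ∧ ∑ i, (2 * x i - β i * x k) ≤ 2 * n := by
  rw [shearSimplex, mem_smul_convexHull_insert_zero_range _ n.cast_nonneg]
  have hsum (c : Fin d → ℝ) (j : Fin d) : (∑ i, c i • fun j =>
      (if i = j then (1 : ℝ) else 0) + if i = k then (β j : ℝ) else 0) j = c j + c k * β j := by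
    simp [Finset.sum_apply, mul_add, Finset.sum_add_distrib]
  constructor
  · rintro ⟨c, hc, hcn, hx⟩
    have hxc (j : Fin d) : (x j : ℝ) = c j + c k * β j := by
      rw [← hsum, hx]
    have hxk : (x k : ℝ) = 2 * c k := by
      rw [hxc, hk]
      push_cast
      ring
    have hw (j : Fin d) : ((2 * x j - β j * x k : ℤ) : ℝ) = 2 * c j := by
      push_cast
      rw [hxk, hxc]
      ring
    constructor
    · intro i
      have := hc i
      rw [← Int.cast_nonneg_iff (R := ℝ), hw]
      positivity
    · rw [← Int.cast_le (R := ℝ), Int.cast_sum, Finset.sum_congr rfl fun i _ => hw i,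
        ← Finset.mul_sum]
      push_cast
      linarith
  · rintro ⟨h0, hn⟩
    refine ⟨fun i => ((2 * x i - β i * x k : ℤ) : ℝ) / 2, fun i => ?_, ?_, ?_⟩
    · have : (0 : ℝ) ≤ ((2 * x i - β i * x k : ℤ) : ℝ) := Int.cast_nonneg (h0 i)
      positivity
    · rw [← Finset.sum_div, ← Int.cast_sum, div_le_iff₀ two_pos, mul_comm]
      exact_mod_cast hn
    · ext j
      rw [hsum, hk]
      push_cast
      ring

/-- Parametrizes the lattice points of the cone over `shearSimplex k β` whose `k`-th coordinate
has the parity of `ε`. -/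
def shearPoint (ε : ℕ) (y : Fin d → ℕ) : Fin d → ℤ := fun i => y i + β i * (y k + ε)

variable {k β}

theorem shearPoint_apply_self (hk : β k = 1) (ε : ℕ) (y : Fin d → ℕ) :
    shearPoint k β ε y k = 2 * y k + ε := by
  rw [shearPoint, hk]
  ring

theorem shearPoint_injective (hk : β k = 1) (ε : ℕ) :
    Function.Injective (shearPoint k β ε) := by
  intro y z h
  have hyz : y k = z k := by
    have := congrFun h k
    rw [shearPoint_apply_self hk, shearPoint_apply_self hk] at this
    omega
  ext i
  have := congrFun h i
  simp only [shearPoint, hyz, add_left_inj] at this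
  exact_mod_cast this

theorem two_mul_shearPoint_sub (hk : β k = 1) (ε : ℕ) (y : Fin d → ℕ) (i : Fin d) :
    2 * shearPoint k β ε y i - β i * shearPoint k β ε y k = 2 * y i + ε * β i := by
  rw [shearPoint_apply_self hk, shearPoint]
  ring

theorem shearPoint_mem_smul_iff (hk : β k = 1) (hβ : ∀ i, 0 ≤ β i) (ε n : ℕ) (y : Fin d → ℕ) :
    (fun i => (shearPoint k β ε y i : ℝ)) ∈ (n : ℝ) • shearSimplex k β ↔
      2 * ∑ i, (y i : ℤ) + ε * ∑ i, β i ≤ 2 * n := by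
  rw [mem_smul_shearSimplex_iff k β hk]
  simp only [two_mul_shearPoint_sub hk, Finset.sum_add_distrib, ← Finset.mul_sum]
  refine and_iff_right fun i => ?_
  have := hβ i
  positivity

theorem exists_shearPoint_eq (hk : β k = 1) (hβ : ∀ i, β i = 0 ∨ β i = 1) {x : Fin d → ℤ}
    (hx : ∀ i, 0 ≤ 2 * x i - β i * x k) :
    ∃ ε < 2, ∃ y, shearPoint k β ε y = x := by
  have hxk : 0 ≤ x k := by
    have := hx k
    rw [hk] at this
    linarith
  refine ⟨(x k % 2).toNat, by omega, fun i => (x i - β i * (x k / 2 + x k % 2)).toNat, ?_⟩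
  ext i
  have hi := hx i
  simp only [shearPoint, hk]
  rcases hβ i with h | h <;> rw [h] at hi ⊢ <;> omega

theorem ehr_shearSimplex (hk : β k = 1) (hβ : ∀ i, β i = 0 ∨ β i = 1) {s : ℕ}
    (hs : ∑ i, β i = 2 * s ∨ ∑ i, β i = 2 * s - 1) (n : ℕ) :
    ehr (shearSimplex k β) n =
      (d + n).choose d + if s ≤ n then (d + (n - s)).choose d else 0 := by
  have hβ0 (i : Fin d) : 0 ≤ β i := by rcases hβ i with h | h <;> simp [h]
  have hset : {x : Fin d → ℤ | (fun i => (x i : ℝ)) ∈ (n : ℝ) • shearSimplex k β} =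
      Set.image (shearPoint k β 0) {y | ∑ i, y i ≤ n} ∪
        Set.image (shearPoint k β 1) {y | ∑ i, y i + s ≤ n} := by
    ext x
    constructor
    · intro hx
      obtain ⟨ε, hε, y, rfl⟩ := exists_shearPoint_eq hk hβ
        ((mem_smul_shearSimplex_iff k β hk n x).1 hx).1
      rw [Set.mem_ofPred_eq, shearPoint_mem_smul_iff hk hβ0, ← Nat.cast_sum] at hx
      interval_cases ε
      · refine Or.inl ⟨y, ?_, rfl⟩
        simp only [Set.mem_ofPred_eq]
        omega
      · refine Or.inr ⟨y, ?_, rfl⟩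
        simp only [Set.mem_ofPred_eq]
        omega
    · rintro (⟨y, hy, rfl⟩ | ⟨y, hy, rfl⟩) <;> rw [Set.mem_ofPred_eq] at hy ⊢ <;>
        rw [shearPoint_mem_smul_iff hk hβ0, ← Nat.cast_sum] <;> omega
  have hfin : {y : Fin d → ℕ | ∑ i, y i + s ≤ n}.Finite :=
    (finite_setOf_sum_le d n).subset fun y hy => by
      simp only [Set.mem_ofPred_eq] at hy ⊢
      omega
  rw [ehr, hset, Set.ncard_union_eq ?_ ((finite_setOf_sum_le d n).image _) (hfin.image _),
    Set.ncard_image_of_injective _ (shearPoint_injective hk 0),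
    Set.ncard_image_of_injective _ (shearPoint_injective hk 1),
    ncard_setOf_sum_le, ncard_setOf_sum_add_le]
  rw [Set.disjoint_left]
  rintro _ ⟨y, -, rfl⟩ ⟨z, -, h⟩
  have := congrFun h k
  rw [shearPoint_apply_self hk, shearPoint_apply_self hk] at this
  omega

end Shear

open PowerSeries in
theorem coeff_one_sub_X_pow (m i : ℕ) :
    coeff i ((1 - X : ℤ⟦X⟧) ^ m) = (-1) ^ i * (m.choose i : ℤ) := by
  have h : (1 - X : ℤ⟦X⟧) ^ m = PowerSeries.evalNegHom ((1 + X) ^ m) := by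
    simp [sub_eq_add_neg, PowerSeries.evalNegHom_X]
  have hcoe : (1 + X : ℤ⟦X⟧) ^ m =
      (((1 + Polynomial.X : Polynomial ℤ) ^ m : Polynomial ℤ) : ℤ⟦X⟧) := by
    simp
  rw [h, hcoe, evalNegHom, coeff_rescale, Polynomial.coeff_coe, Polynomial.coeff_one_add_X_pow]

open PowerSeries in
theorem deltaVec_eq_coeff {N : ℕ} (P : Set (Fin N → ℝ)) (d i : ℕ) :
    deltaVec P d i = coeff i (mk (fun n => (ehr P n : ℤ)) * (1 - X) ^ (d + 1)) := by
  rw [coeff_mul, Finset.Nat.sum_antidiagonal_eq_sum_range_succ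
    (fun a b => coeff a (mk fun n => (ehr P n : ℤ)) * coeff b ((1 - X : ℤ⟦X⟧) ^ (d + 1))), deltaVec]
  refine Finset.sum_congr rfl fun j _ => ?_
  rw [coeff_one_sub_X_pow, coeff_mk]
  ring

open PowerSeries in
theorem deltaVec_of_ehr_eq {N : ℕ} {P : Set (Fin N → ℝ)} {d s : ℕ}
    (h : ∀ n, ehr P n = (d + n).choose d + if s ≤ n then (d + (n - s)).choose d else 0) (i : ℕ) :
    deltaVec P d i = (1 + Polynomial.X ^ s : Polynomial ℤ).coeff i := by
  have hmk : mk (fun n => (ehr P n : ℤ)) =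
      (1 + X ^ s) * mk fun n => ((d + n).choose d : ℤ) := by
    ext n
    rw [add_mul, one_mul, map_add, coeff_X_pow_mul', coeff_mk, coeff_mk, coeff_mk, h]
    push_cast
    rfl
  rw [deltaVec_eq_coeff, hmk, mul_assoc, mk_add_choose_mul_one_sub_pow_eq_one, mul_one,
    ← Polynomial.coeff_coe]
  simp

theorem stmt9 (d : ℕ) (hd : 1 ≤ d) (k : Fin d) (a : Fin d → ℤ)
    (ha : ∀ ℓ : Fin d, ℓ < k → a ℓ = 0 ∨ a ℓ = 1)
    (A : Matrix (Fin d) (Fin d) ℤ)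
    (hA : A = Matrix.of fun i j =>
      if i = k then (if j = k then (2 : ℤ) else if j < k then a j else 0)
      else if i = j then 1 else 0)
    (d1 : ℕ)
    (hd1 : d1 = (Finset.univ.filter fun ℓ : Fin d => ℓ < k ∧ a ℓ = 1).card)
    (P : Set (Fin d → ℝ))
    (hP : P = convexHull ℝ
      (insert (0 : Fin d → ℝ) (Set.range fun i j => (A i j : ℝ)))) :
    ∑ i ∈ Finset.range (d + 1), Polynomial.C (deltaVec P d i) * Polynomial.X ^ i
    = 1 + (Polynomial.X : Polynomial ℤ) ^
        ((1 - Int.fdiv (1 - (d1 : ℤ)) 2).toNat) := by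
  let β : Fin d → ℤ := fun j => if j = k then 1 else if j < k then a j else 0
  have hk : β k = 1 := by simp [β]
  have hβ (i : Fin d) : β i = 0 ∨ β i = 1 := by
    simp only [β]
    split_ifs with h₁ h₂
    · exact Or.inr rfl
    · exact ha i h₂
    · exact Or.inl rfl
  have hPβ : P = shearSimplex k β := by
    rw [hP, shearSimplex]
    congr 2
    ext1
    congr! 3 with i
    ext j
    subst hA
    simp only [Matrix.of_apply, β]
    by_cases hi : i = k
    · subst hi
      by_cases hj : j = i
      · subst hj
        norm_num
      · simp [hj, Ne.symm hj]
    · simp [hi]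
  have hsum : ∑ i, β i = d1 + 1 := by
    have hβ' (i : Fin d) : β i = (if i < k ∧ a i = 1 then 1 else 0) + if i = k then 1 else 0 := by
      simp only [β]
      rcases lt_trichotomy i k with h | h | h
      · rcases ha i h with h' | h' <;> simp [h, h.ne, h']
      · simp [h]
      · simp [h.ne', h.not_gt]
    rw [Finset.sum_congr rfl fun i _ => hβ' i, Finset.sum_add_distrib, hd1]
    simp
  have hd1_lt : d1 < d := by
    rw [hd1]
    exact (Finset.card_lt_card
      (Finset.filter_ssubset.2 ⟨k, Finset.mem_univ k, by simp⟩)).trans_eq (by simp)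
  have hs : (1 - Int.fdiv (1 - (d1 : ℤ)) 2).toNat = (d1 + 2) / 2 := by
    rw [Int.fdiv_eq_ediv_of_nonneg _ (by norm_num)]
    omega
  rw [hs]
  have hδ := deltaVec_of_ehr_eq (ehr_shearSimplex (s := (d1 + 2) / 2) hk hβ (by omega))
  rw [hPβ, Polynomial.as_sum_range_C_mul_X_pow' (n := d + 1)
    (p := 1 + Polynomial.X ^ ((d1 + 2) / 2))]
  · simp only [hδ]
  · refine Nat.lt_succ_of_le ((Polynomial.natDegree_add_le _ _).trans ?_)
    simp only [Polynomial.natDegree_one, Polynomial.natDegree_X_pow]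
    omega
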